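/- Let E be a unital idempotent CPTP map on d×d complex matrices, let a ∈ (0,1)∪(1,2], let ρ be a positive definite density matrix, and let σ be a positive definite density matrix with E(σ) = σ. Then Tr(ρ^a σ^{1−a}) = Tr(E(ρ^a) σ^{1−a}). -/

import Mathlib

open Matrix
open scoped ComplexOrder

/-- Matrix power `A ^ t` for real `t`, via the continuous functional calculus
(applying `x ↦ x ^ t` to the eigenvalues of a Hermitian matrix `A`). -/
noncomputable def mpow {d : ℕ} (A : Matrix (Fin d) (Fin d) ℂ) (t : ℝ) :
    Matrix (Fin d) (Fin d) ℂ :=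
  cfc (fun x : ℝ => x ^ t) A

/-- The Tsallis-based relative entropy
`S̃_a(ρ|σ) = ((Tr (ρ^a σ^(1-a)))^(1/a) - 1) / (a - 1)`. -/
noncomputable def tsallis {d : ℕ} (a : ℝ) (ρ σ : Matrix (Fin d) (Fin d) ℂ) : ℝ :=
  ((((mpow ρ a * mpow σ (1 - a)).trace).re) ^ (1 / a) - 1) / (a - 1)

/-!
Every fixed point `A` of a unital trace-preserving map `E X = ∑ i, K i * X * (K i)ᴴ` commutes
with all Kraus operators: the commutators `C i = K i * A - A * K i` satisfy
`∑ i, C i * (C i)ᴴ = E (A * Aᴴ) - A * Aᴴ`, which has trace zero, so each `C i` vanishes. A matrix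
`M` commuting with all `K i`, such as a function of a Hermitian fixed point, satisfies
`M * E X = E (M * X)`; now take traces.
-/

section Kraus

variable {ι m n R : Type*} [Fintype ι] [Fintype n] [CommSemiring R] [StarRing R]

/-- The completely positive map with Kraus operators `K i`, in the Schrödinger picture. The
operators may be rectangular and no normalization is imposed on them. -/
@[simps]
def krausMap (K : ι → Matrix m n R) : Matrix n n R →ₗ[R] Matrix m m R where
  toFun X := ∑ i, K i * X * (K i)ᴴ
  map_add' X Y := by simp only [Matrix.mul_add, Matrix.add_mul, Finset.sum_add_distrib]
  map_smul' c X := by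
    simp only [Matrix.mul_smul, Matrix.smul_mul, Finset.smul_sum, RingHom.id_apply]

theorem krausMap_conjTranspose (K : ι → Matrix m n R) (X : Matrix n n R) :
    krausMap K Xᴴ = (krausMap K X)ᴴ := by
  simp only [krausMap_apply, conjTranspose_sum, conjTranspose_mul, conjTranspose_conjTranspose,
    Matrix.mul_assoc]

theorem trace_krausMap [Fintype m] [DecidableEq n] {K : ι → Matrix m n R}
    (hTP : ∑ i, (K i)ᴴ * K i = 1) (X : Matrix n n R) :
    (krausMap K X).trace = X.trace :=
  calc (krausMap K X).trace = ∑ i, (K i * X * (K i)ᴴ).trace := trace_sum _ _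
    _ = ∑ i, ((K i)ᴴ * K i * X).trace := Finset.sum_congr rfl fun _ _ => trace_mul_cycle _ _ _
    _ = X.trace := by rw [← trace_sum, ← Finset.sum_mul, hTP, Matrix.one_mul]

theorem mul_krausMap_of_commute {K : ι → Matrix n n R} {M : Matrix n n R}
    (hM : ∀ i, Commute M (K i)) (X : Matrix n n R) :
    M * krausMap K X = krausMap K (M * X) := by
  simp only [krausMap_apply, Finset.mul_sum, ← Matrix.mul_assoc, (hM _).eq]

theorem trace_krausMap_mul_of_commute [DecidableEq n] {K : ι → Matrix n n R}
    (hTP : ∑ i, (K i)ᴴ * K i = 1) {M : Matrix n n R} (hM : ∀ i, Commute M (K i))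
    (X : Matrix n n R) : (krausMap K X * M).trace = (X * M).trace := by
  rw [trace_mul_comm, mul_krausMap_of_commute hM, trace_krausMap hTP, trace_mul_comm]

end Kraus

section FixedPoints

variable {ι n R : Type*} [Fintype ι] [Fintype n] [DecidableEq n] [CommRing R] [StarRing R]

theorem sum_commutator_mul_conjTranspose (K : ι → Matrix n n R) (A : Matrix n n R) :
    ∑ i, (K i * A - A * K i) * (K i * A - A * K i)ᴴ =
      krausMap K (A * Aᴴ) - krausMap K A * Aᴴ - A * krausMap K Aᴴ + A * krausMap K 1 * Aᴴ := by
  simp only [krausMap_apply, Finset.sum_mul, Finset.mul_sum, ← Finset.sum_sub_distrib,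
    ← Finset.sum_add_distrib]
  refine Finset.sum_congr rfl fun i _ => ?_
  rw [conjTranspose_sub, conjTranspose_mul, conjTranspose_mul]
  noncomm_ring

theorem commute_of_krausMap_eq_self [PartialOrder R] [StarOrderedRing R] [NoZeroDivisors R]
    {K : ι → Matrix n n R} (hTP : ∑ i, (K i)ᴴ * K i = 1)
    (hUnital : krausMap K 1 = 1) {A : Matrix n n R} (hA : krausMap K A = A) (i : ι) :
    Commute A (K i) := by
  have trace_sum_eq_zero :
      ∑ j, ((K j * A - A * K j) * (K j * A - A * K j)ᴴ).trace = 0 := by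
    rw [← trace_sum, sum_commutator_mul_conjTranspose, krausMap_conjTranspose, hA, hUnital,
      Matrix.mul_one, sub_add_cancel, trace_sub, trace_krausMap hTP, sub_self]
  have trace_eq_zero : ((K i * A - A * K i) * (K i * A - A * K i)ᴴ).trace = 0 :=
    (Finset.sum_eq_zero_iff_of_nonneg fun _ _ =>
      (posSemidef_self_mul_conjTranspose _).trace_nonneg).mp trace_sum_eq_zero i
        (Finset.mem_univ i)
  exact (sub_eq_zero.mp (trace_mul_conjTranspose_self_eq_zero_iff.mp trace_eq_zero)).symm

end FixedPoints

theorem stmt_3_general {ι n 𝕜 : Type*} [Fintype ι] [Fintype n] [DecidableEq n] [RCLike 𝕜]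
    {K : ι → Matrix n n 𝕜} (hTP : ∑ i, (K i)ᴴ * K i = 1) (hUnital : krausMap K 1 = 1)
    {σ : Matrix n n 𝕜} (hσ : σ.IsHermitian) (hfix : krausMap K σ = σ)
    (f : ℝ → ℝ) (X : Matrix n n 𝕜) :
    (X * cfc f σ).trace = (krausMap K X * cfc f σ).trace :=
  have commute_cfc (i : ι) : Commute (cfc f σ) (K i) :=
    hσ.isSelfAdjoint.commute_cfc (commute_of_krausMap_eq_self hTP hUnital hfix i) f
  (trace_krausMap_mul_of_commute hTP commute_cfc X).symm

/-- For a unital idempotent CPTP map `E`, `a ∈ (0,1) ∪ (1,2]`, a positive definite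
density matrix `ρ` and a positive definite density matrix `σ` fixed by `E`:
`Tr(ρ^a σ^(1-a)) = Tr(E(ρ^a) σ^(1-a))`. -/
theorem stmt_3 {d : ℕ}
    (E : Matrix (Fin d) (Fin d) ℂ →ₗ[ℂ] Matrix (Fin d) (Fin d) ℂ)
    (hKraus : ∃ (n : ℕ) (K : Fin n → Matrix (Fin d) (Fin d) ℂ),
      (∀ X, E X = ∑ i, K i * X * (K i)ᴴ) ∧ ∑ i, (K i)ᴴ * K i = 1)
    (hUnital : E 1 = 1)
    (hIdem : ∀ X, E (E X) = E X)
    (a : ℝ) (ha : a ∈ Set.Ioo (0 : ℝ) 1 ∪ Set.Ioc (1 : ℝ) 2)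
    (ρ : Matrix (Fin d) (Fin d) ℂ) (hρ : ρ.PosDef) (hρtr : ρ.trace = 1)
    (σ : Matrix (Fin d) (Fin d) ℂ) (hσ : σ.PosDef) (hσtr : σ.trace = 1)
    (hfix : E σ = σ) :
    (mpow ρ a * mpow σ (1 - a)).trace = (E (mpow ρ a) * mpow σ (1 - a)).trace := by
  obtain ⟨_, K, hE, hTP⟩ := hKraus
  obtain rfl : E = krausMap K := LinearMap.ext hE
  exact stmt_3_general hTP hUnital hσ.isHermitian hfix (fun x => x ^ (1 - a)) (mpow ρ a)
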